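/- arXiv:2206.12631 — 2 statements merged into one kernel-verified Lean document; each statement's English description precedes it below -/
import Mathlib

section
/- Let 𝒫 be a type system with associated equivalence relation ∼, and let U and U′ be clopen subsets of 𝔠 that have the same s-type. Then there exist decompositions U = γ₁𝔠 ∪ … ∪ γₙ𝔠 and U′ = δ₁𝔠 ∪ … ∪ δₙ𝔠 into the same number n of pairwise disjoint cones such that γᵢ ∼ δᵢ for i = 1,…,n. -/
/-! The idea is confluence. Rewrite finite sums of cones by replacing one cone `α𝔠` by `α0𝔠 + α1𝔠`.
Replacements of different summands commute, so any two expansions of the same sum can be expanded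
further to a common one; and by coherence every expansion of a sum can be imitated on a sum that
matches it type by type. Hence "admitting expansions that match type by type" is transitive, and
therefore a congruence. It contains the defining relations of `S(𝒫)`, so it contains equality in
`S(𝒫)`. Finally, expanding a decomposition of a clopen set gives a decomposition of the same set. -/

/-- Addresses: finite words over the alphabet `{0,1}` (`Bool`). -/
abbrev Addr : Type := List Bool

/-- Cantor space: infinite words over the alphabet `{0,1}`. -/
abbrev Cantor : Type := ℕ → Bool

/-- Prepend the finite word `α` to the infinite word `w`. -/
def wcat (α : Addr) (w : Cantor) : Cantor := fun n =>
  if h : n < α.length then α.get ⟨n, h⟩ else w (n - α.length)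

/-- The cone of the address `α`: the set of infinite words having `α` as a prefix. -/
def cone (α : Addr) : Set Cantor := Set.range (wcat α)

/-- `g` is a prefix substitution map: there are partitions of Cantor space into cones
`(A i)𝔠` and `(B i)𝔠` such that `g` maps `(A i) w` to `(B i) w`. -/
def IsPrefixSubst (g : Equiv.Perm Cantor) : Prop :=
  ∃ (n : ℕ) (A B : Fin n → Addr),
    (∀ i j, i ≠ j → Disjoint (cone (A i)) (cone (A j))) ∧
    (⋃ i, cone (A i)) = Set.univ ∧
    (∀ i j, i ≠ j → Disjoint (cone (B i)) (cone (B j))) ∧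
    (⋃ i, cone (B i)) = Set.univ ∧
    (∀ i w, g (wcat (A i) w) = wcat (B i) w)

/-- Thompson's group `V`, as the set of prefix substitution maps inside `Equiv.Perm Cantor`. -/
def VSet : Set (Equiv.Perm Cantor) := { g | IsPrefixSubst g }

/-- `α ^ g = β` : `g` maps the cone of `α` onto the cone of `β` by the prefix
substitution `α ↦ β`. -/
def actsOn (g : Equiv.Perm Cantor) (α β : Addr) : Prop :=
  ∀ w, g (wcat α w) = wcat β w

/-- A subset of `Equiv.Perm Cantor` that is closed under the group operations. -/
def IsSubgroupSet (M : Set (Equiv.Perm Cantor)) : Prop :=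
  (1 : Equiv.Perm Cantor) ∈ M ∧ (∀ g ∈ M, ∀ h ∈ M, g * h ∈ M) ∧ ∀ g ∈ M, g⁻¹ ∈ M

/-- `M` is a maximal subgroup of Thompson's group `V`. -/
def IsMaximalSubgroupOfV (M : Set (Equiv.Perm Cantor)) : Prop :=
  IsSubgroupSet M ∧ M ⊆ VSet ∧ M ≠ VSet ∧
    ∀ H : Set (Equiv.Perm Cantor),
      IsSubgroupSet H → M ⊆ H → H ⊆ VSet → H = M ∨ H = VSet

/-- A relation on addresses is coherent if `α ∼ β` implies `α0 ∼ β0` and `α1 ∼ β1`. -/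
def Coherent (r : Addr → Addr → Prop) : Prop :=
  ∀ α β, r α β → r (α ++ [false]) (β ++ [false]) ∧ r (α ++ [true]) (β ++ [true])

/-- A relation on addresses is reduced if `α0 ∼ β0` and `α1 ∼ β1` imply `α ∼ β`. -/
def Reduced (r : Addr → Addr → Prop) : Prop :=
  ∀ α β, r (α ++ [false]) (β ++ [false]) → r (α ++ [true]) (β ++ [true]) → r α β

/-- A type system: a coherent and reduced equivalence relation on addresses
(identified with the partition of `Ω` into its classes). -/
def IsTypeSystem (r : Addr → Addr → Prop) : Prop :=
  Equivalence r ∧ Coherent r ∧ Reduced r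

/-- `g` fixes the parts of `r`: for all but finitely many addresses `α`, the image
`α ^ g` is defined and equivalent to `α`. -/
def FixesParts (r : Addr → Addr → Prop) (g : Equiv.Perm Cantor) : Prop :=
  { α : Addr | ¬ ∃ β, actsOn g α β ∧ r α β }.Finite

/-- `g` stabilizes `r`: on some cofinite set of addresses, `α ^ g` is defined and `g`
preserves equivalence and inequivalence of addresses. -/
def Stabilizes (r : Addr → Addr → Prop) (g : Equiv.Perm Cantor) : Prop :=
  ∃ Ω₀ : Set Addr, Ω₀ᶜ.Finite ∧ (∀ α ∈ Ω₀, ∃ β, actsOn g α β) ∧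
    ∀ α ∈ Ω₀, ∀ α' ∈ Ω₀, ∀ β β', actsOn g α β → actsOn g α' β' → (r α α' ↔ r β β')

/-- `Fix_V(𝒫)`: the elements of Thompson's group `V` fixing the parts of `r`. -/
def FixSet (r : Addr → Addr → Prop) : Set (Equiv.Perm Cantor) :=
  { g | IsPrefixSubst g ∧ FixesParts r g }

/-- `Stab_V(𝒫)`: the elements of Thompson's group `V` stabilizing `r`. -/
def StabSet (r : Addr → Addr → Prop) : Set (Equiv.Perm Cantor) :=
  { g | IsPrefixSubst g ∧ Stabilizes r g }

/-- The type system of `s` is a quotient of that of `r`. -/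
def IsQuotientOf (s r : Addr → Addr → Prop) : Prop :=
  IsTypeSystem s ∧ ∀ α β, r α β → s α β

/-- A simple type system: the universal relation is a proper quotient, and every
quotient is either the type system itself or the universal one. -/
def SimpleTS (r : Addr → Addr → Prop) : Prop :=
  IsTypeSystem r ∧ (∃ α β : Addr, ¬ r α β) ∧
    ∀ s : Addr → Addr → Prop, IsQuotientOf s r →
      (∀ α β, s α β ↔ r α β) ∨ ∀ α β, s α β

/-- The type (equivalence class) of the address `α`. -/
def typeOf (r : Addr → Addr → Prop) (α : Addr) : Set Addr := { β | r α β }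

/-- The defining relations of the semigroup `S(𝒫)`, with one generator for each
address (generators of equivalent addresses being identified): `x_α = x_{α0} + x_{α1}`
and `x_α = x_β` whenever `α ∼ β`.  Sums of generators are encoded as multisets. -/
def stypeRel (r : Addr → Addr → Prop) : Multiset Addr → Multiset Addr → Prop :=
  fun x y =>
    (∃ α : Addr, x = {α} ∧ y = {α ++ [false], α ++ [true]}) ∨
    (∃ α β : Addr, r α β ∧ x = {α} ∧ y = {β})

/-- The congruence presenting the semigroup `S(𝒫)`. -/
def stypeCon (r : Addr → Addr → Prop) : AddCon (Multiset Addr) :=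
  addConGen (stypeRel r)

/-- The multiset `m` encodes a decomposition of `U` into pairwise disjoint cones. -/
def Decomp (U : Set Cantor) (m : Multiset Addr) : Prop :=
  Multiset.Pairwise (fun a b => Disjoint (cone a) (cone b)) m ∧
    U = { w : Cantor | ∃ a ∈ m, w ∈ cone a }

/-- `U` and `U'` have the same s-type: some (equivalently, any) decompositions of `U`
and `U'` into disjoint cones have identified images in `S(𝒫)`. -/
def SameSType (r : Addr → Addr → Prop) (U U' : Set Cantor) : Prop :=
  ∃ m m' : Multiset Addr, m ≠ 0 ∧ m' ≠ 0 ∧ Decomp U m ∧ Decomp U' m' ∧ stypeCon r m m'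

section Expansion

variable {X Y : Type*}

/-- One step of the rewriting system on multisets (finite formal sums) with rules `a ↦ c a`:
a single occurrence of some `a` is replaced by the multiset `c a`. -/
def ExpandStep (c : X → Multiset X) (x y : Multiset X) : Prop :=
  ∃ a s, x = a ::ₘ s ∧ y = c a + s

/-- `y` is an expansion of `x`: it arises from `x` by finitely many replacements `a ↦ c a`. -/
def Expands (c : X → Multiset X) : Multiset X → Multiset X → Prop :=
  Relation.ReflTransGen (ExpandStep c)

/-- `x` and `y` have expansions whose elements can be matched up in `r`-related pairs. For an
equivalence relation `r` this says that they have a common expansion as sums of `r`-classes. -/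
def HaveMatchingExpansions (c : X → Multiset X) (r : X → X → Prop) (x y : Multiset X) : Prop :=
  ∃ x' y', Expands c x x' ∧ Expands c y y' ∧ Multiset.Rel r x' y'

variable {c : X → Multiset X}

lemma ExpandStep.add_right {x y : Multiset X} (h : ExpandStep c x y) (z : Multiset X) :
    ExpandStep c (x + z) (y + z) := by
  obtain ⟨a, s, rfl, rfl⟩ := h
  exact ⟨a, s + z, Multiset.cons_add a s z, add_assoc _ _ _⟩

lemma ExpandStep.add_left {x y : Multiset X} (z : Multiset X) (h : ExpandStep c x y) :
    ExpandStep c (z + x) (z + y) := by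
  simpa only [add_comm z] using h.add_right z

lemma Expands.add {x y x' y' : Multiset X} (h : Expands c x y) (h' : Expands c x' y') :
    Expands c (x + x') (y + y') :=
  (Relation.ReflTransGen.lift (· + x') (fun _ _ hs => ExpandStep.add_right hs x') x y h).trans
    (Relation.ReflTransGen.lift (y + ·) (fun _ _ hs => ExpandStep.add_left y hs) x' y' h')

lemma expands_singleton (c : X → Multiset X) (a : X) : Expands c {a} (c a) :=
  .single ⟨a, 0, rfl, (add_zero _).symm⟩

lemma ExpandStep.diamond {x y z : Multiset X} (hy : ExpandStep c x y) (hz : ExpandStep c x z) :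
    ∃ t, Relation.ReflGen (ExpandStep c) y t ∧ Expands c z t := by
  obtain ⟨a, s, rfl, rfl⟩ := hy
  obtain ⟨b, s', hx, rfl⟩ := hz
  rcases Multiset.cons_eq_cons.1 hx with ⟨rfl, rfl⟩ | ⟨-, u, rfl, rfl⟩
  · exact ⟨_, .refl, .refl⟩
  · refine ⟨c a + (c b + u), .single ⟨b, c a + u, ?_, ?_⟩, .single ⟨a, c b + u, ?_, rfl⟩⟩
    · exact Multiset.add_cons b (c a) u
    · exact add_left_comm _ _ _
    · exact Multiset.add_cons a (c b) u

lemma Expands.confluent {x y z : Multiset X} (hy : Expands c x y) (hz : Expands c x z) :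
    ∃ t, Expands c y t ∧ Expands c z t :=
  Relation.church_rosser (fun _ _ _ => ExpandStep.diamond) hy hz

section Simulation

variable {d : Y → Multiset Y} {r : X → Y → Prop}

lemma ExpandStep.exists_of_rel (hcd : ∀ a b, r a b → Multiset.Rel r (c a) (d b))
    {x : Multiset X} {y z : Multiset Y} (hxy : Multiset.Rel r x y) (hyz : ExpandStep d y z) :
    ∃ x', ExpandStep c x x' ∧ Multiset.Rel r x' z := by
  obtain ⟨b, s, rfl, rfl⟩ := hyz
  obtain ⟨a, s', hab, hs, rfl⟩ := Multiset.rel_cons_right.1 hxy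
  exact ⟨c a + s', ⟨a, s', rfl, rfl⟩, (hcd a b hab).add hs⟩

lemma Expands.exists_of_rel (hcd : ∀ a b, r a b → Multiset.Rel r (c a) (d b))
    {x : Multiset X} {y z : Multiset Y} (hxy : Multiset.Rel r x y) (hyz : Expands d y z) :
    ∃ x', Expands c x x' ∧ Multiset.Rel r x' z := by
  induction hyz with
  | refl => exact ⟨x, .refl, hxy⟩
  | tail _ hstep ih =>
    obtain ⟨x', hx', hrel⟩ := ih
    obtain ⟨x'', hx'', hrel'⟩ := hstep.exists_of_rel hcd hrel
    exact ⟨x'', hx'.tail hx'', hrel'⟩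

end Simulation

lemma multisetRel_symm {r : X → X → Prop} [Std.Symm r] {x y : Multiset X}
    (h : Multiset.Rel r x y) : Multiset.Rel r y x :=
  Multiset.rel_flip.1 (h.mono fun _ _ _ _ hab => symm_of r hab)

namespace HaveMatchingExpansions

variable {r : X → X → Prop}

lemma of_rel {x y : Multiset X} (h : Multiset.Rel r x y) : HaveMatchingExpansions c r x y :=
  ⟨x, y, .refl, .refl, h⟩

lemma symm [Std.Symm r] {x y : Multiset X} (h : HaveMatchingExpansions c r x y) :
    HaveMatchingExpansions c r y x := by
  obtain ⟨x', y', hx, hy, hxy⟩ := h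
  exact ⟨y', x', hy, hx, multisetRel_symm hxy⟩

lemma trans [Std.Symm r] [IsTrans X r] (hc : ∀ a b, r a b → Multiset.Rel r (c a) (c b))
    {x y z : Multiset X} (hxy : HaveMatchingExpansions c r x y)
    (hyz : HaveMatchingExpansions c r y z) : HaveMatchingExpansions c r x z := by
  obtain ⟨x₁, y₁, hx, hy₁, hxy⟩ := hxy
  obtain ⟨z₁, y₂, hz, hy₂, hzy⟩ := hyz.symm
  obtain ⟨t, ht₁, ht₂⟩ := hy₁.confluent hy₂
  obtain ⟨x₂, hx₂, hxt⟩ := ht₁.exists_of_rel hc hxy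
  obtain ⟨z₂, hz₂, hzt⟩ := ht₂.exists_of_rel hc hzy
  exact ⟨x₂, z₂, hx.trans hx₂, hz.trans hz₂, hxt.trans r (multisetRel_symm hzt)⟩

lemma add {x y x' y' : Multiset X} (h : HaveMatchingExpansions c r x y)
    (h' : HaveMatchingExpansions c r x' y') : HaveMatchingExpansions c r (x + x') (y + y') := by
  obtain ⟨u, v, hu, hv, huv⟩ := h
  obtain ⟨u', v', hu', hv', huv'⟩ := h'
  exact ⟨u + u', v + v', hu.add hu', hv.add hv', huv.add huv'⟩

end HaveMatchingExpansions

/-- `HaveMatchingExpansions` as a congruence, for expansion rules `c` that are compatible with the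
equivalence relation `r`. -/
def matchingExpansionsCon {r : X → X → Prop} (hr : Equivalence r)
    (hc : ∀ a b, r a b → Multiset.Rel r (c a) (c b)) : AddCon (Multiset X) where
  r := HaveMatchingExpansions c r
  iseqv :=
    have : Std.Symm r := ⟨fun _ _ => hr.symm⟩
    have : IsTrans X r := ⟨fun _ _ _ => hr.trans⟩
    { refl := fun _ => .of_rel (Multiset.rel_refl_of_refl_on fun a _ => hr.refl a)
      symm := .symm
      trans := .trans hc }
  add' := HaveMatchingExpansions.add

lemma exists_ofFn_of_multisetRel {r : X → Y → Prop} {x : Multiset X} {y : Multiset Y}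
    (h : Multiset.Rel r x y) :
    ∃ (n : ℕ) (f : Fin n → X) (g : Fin n → Y),
      x = List.ofFn f ∧ y = List.ofFn g ∧ ∀ i, r (f i) (g i) := by
  induction h with
  | zero => exact ⟨0, Fin.elim0, Fin.elim0, rfl, rfl, fun i => i.elim0⟩
  | @cons a b _ _ hab _ ih =>
    obtain ⟨n, f, g, rfl, rfl, hfg⟩ := ih
    exact ⟨n + 1, Fin.cons a f, Fin.cons b g, by simp, by simp, Fin.cases hab hfg⟩

end Expansion

section Cones

lemma wcat_append (α β : Addr) (w : Cantor) : wcat (α ++ β) w = wcat α (wcat β w) := by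
  funext n
  simp only [wcat]
  grind

lemma wcat_injective (α : Addr) : Function.Injective (wcat α) := by
  intro v w h
  funext n
  simpa [wcat] using congrFun h (n + α.length)

lemma cone_append (α β : Addr) : cone (α ++ β) = wcat α '' cone β := by
  simp only [cone, ← Set.range_comp]
  exact congrArg Set.range (funext (wcat_append α β))

lemma mem_cone_singleton {b : Bool} {w : Cantor} : w ∈ cone [b] ↔ w 0 = b := by
  refine ⟨?_, fun h => ⟨fun n => w (n + 1), ?_⟩⟩
  · rintro ⟨v, rfl⟩
    rfl
  · funext n
    cases n <;> simp [wcat, h]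

lemma disjoint_cone_append_singleton (α : Addr) {b b' : Bool} (h : b ≠ b') :
    Disjoint (cone (α ++ [b])) (cone (α ++ [b'])) := by
  rw [cone_append, cone_append, Set.disjoint_image_iff (wcat_injective α), Set.disjoint_left]
  intro w hw hw'
  exact h ((mem_cone_singleton.1 hw).symm.trans (mem_cone_singleton.1 hw'))

lemma cone_eq_union (α : Addr) : cone α = cone (α ++ [false]) ∪ cone (α ++ [true]) := by
  have huniv : cone [false] ∪ cone [true] = Set.univ :=
    Set.eq_univ_of_forall fun w => by
      simp only [Set.mem_union, mem_cone_singleton, Bool.eq_false_or_eq_true_self]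
  rw [cone_append, cone_append, ← Set.image_union, huniv, Set.image_univ, cone]

end Cones

section Decompositions

variable {U : Set Cantor}

instance symm_disjoint_cone : Std.Symm fun α β : Addr => Disjoint (cone α) (cone β) :=
  ⟨fun _ _ h => h.symm⟩

lemma decomp_coe_iff {l : List Addr} :
    Decomp U l ↔ l.Pairwise (fun α β => Disjoint (cone α) (cone β)) ∧ U = ⋃ α ∈ l, cone α := by
  have hunion : {w | ∃ α ∈ (l : Multiset Addr), w ∈ cone α} = ⋃ α ∈ l, cone α := by
    ext w
    simp
  rw [Decomp, Multiset.pairwise_coe_iff_pairwise, hunion]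

lemma decomp_ofFn_iff {n : ℕ} {γ : Fin n → Addr} :
    Decomp U (List.ofFn γ) ↔
      (∀ i j, i ≠ j → Disjoint (cone (γ i)) (cone (γ j))) ∧ U = ⋃ i, cone (γ i) := by
  have hunion : ⋃ α ∈ List.ofFn γ, cone α = ⋃ i, cone (γ i) := by
    simp [List.mem_ofFn, Set.iUnion_exists]
  rw [decomp_coe_iff, hunion, List.pairwise_ofFn]
  refine and_congr_left fun _ => ⟨fun h i j hij => ?_, fun h i j hij => h i j hij.ne⟩
  rcases hij.lt_or_gt with hlt | hgt
  exacts [h hlt, (h hgt).symm]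

lemma decomp_singleton_iff {α : Addr} : Decomp U {α} ↔ U = cone α := by
  rw [← Multiset.coe_singleton, decomp_coe_iff]
  simp

lemma decomp_add_iff {m m' : Multiset Addr} :
    Decomp U (m + m') ↔ ∃ V V', Decomp V m ∧ Decomp V' m' ∧ Disjoint V V' ∧ U = V ∪ V' := by
  induction m using Quotient.inductionOn with | _ l
  induction m' using Quotient.inductionOn with | _ l'
  simp only [Multiset.quot_mk_to_coe, Multiset.coe_add, decomp_coe_iff, List.pairwise_append]
  have hdisj_iff : Disjoint (⋃ α ∈ l, cone α) (⋃ β ∈ l', cone β) ↔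
      ∀ α ∈ l, ∀ β ∈ l', Disjoint (cone α) (cone β) :=
    Set.disjoint_iUnion₂_left.trans (forall₂_congr fun _ _ => Set.disjoint_iUnion₂_right)
  have hunion : ⋃ α ∈ l ++ l', cone α = (⋃ α ∈ l, cone α) ∪ ⋃ β ∈ l', cone β := by
    simp only [List.mem_append, Set.iUnion_or, Set.iUnion_union_distrib]
  rw [hunion]
  constructor
  · rintro ⟨⟨hl, hl', hdisj⟩, hU⟩
    exact ⟨_, _, ⟨hl, rfl⟩, ⟨hl', rfl⟩, hdisj_iff.2 hdisj, hU⟩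
  · rintro ⟨_, _, ⟨hl, rfl⟩, ⟨hl', rfl⟩, hdisj, hU⟩
    exact ⟨⟨hl, hl', hdisj_iff.1 hdisj⟩, hU⟩

section

variable {c : Addr → Multiset Addr} {m m' : Multiset Addr}

lemma Decomp.expandStep (hc : ∀ α, Decomp (cone α) (c α)) (h : Decomp U m)
    (hm : ExpandStep c m m') : Decomp U m' := by
  obtain ⟨α, s, rfl, rfl⟩ := hm
  rw [← Multiset.singleton_add, decomp_add_iff] at h
  obtain ⟨V, V', hV, hV', hdisj, hU⟩ := h
  obtain rfl := decomp_singleton_iff.1 hV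
  exact decomp_add_iff.2 ⟨cone α, V', hc α, hV', hdisj, hU⟩

lemma Decomp.expands (hc : ∀ α, Decomp (cone α) (c α)) (h : Decomp U m) (hm : Expands c m m') :
    Decomp U m' := by
  induction hm with
  | refl => exact h
  | tail _ hstep ih => exact ih.expandStep hc hstep

end

/-- The expansion rule `α ↦ α0 + α1` on addresses, which underlies the relations `p = p₀ + p₁`
of `S(𝒫)`. -/
def halves (α : Addr) : Multiset Addr := {α ++ [false], α ++ [true]}

lemma decomp_cone_halves (α : Addr) : Decomp (cone α) (halves α) :=
  decomp_add_iff.2 ⟨_, _, decomp_singleton_iff.2 rfl, decomp_singleton_iff.2 rfl,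
    disjoint_cone_append_singleton α Bool.false_ne_true, cone_eq_union α⟩

end Decompositions

section Types

variable {r : Addr → Addr → Prop}

lemma Coherent.rel_halves (hc : Coherent r) (α β : Addr) (h : r α β) :
    Multiset.Rel r (halves α) (halves β) :=
  .cons (hc α β h).1 (.cons (hc α β h).2 .zero)

lemma stypeCon_le_matchingExpansionsCon (hr : Equivalence r) (hc : Coherent r) :
    stypeCon r ≤ matchingExpansionsCon hr hc.rel_halves := by
  refine AddCon.addConGen_le.2 ?_
  rintro _ _ (⟨α, rfl, rfl⟩ | ⟨α, β, hαβ, rfl, rfl⟩)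
  · exact ⟨halves α, halves α, expands_singleton halves α, .refl,
      Multiset.rel_refl_of_refl_on fun a _ => hr.refl a⟩
  · exact .of_rel (.cons hαβ .zero)

theorem sameSType_decompositions_general (hr : Equivalence r) (hc : Coherent r)
    {U U' : Set Cantor} (h : SameSType r U U') :
    ∃ (n : ℕ) (γ δ : Fin n → Addr),
      (∀ i j, i ≠ j → Disjoint (cone (γ i)) (cone (γ j))) ∧
      (∀ i j, i ≠ j → Disjoint (cone (δ i)) (cone (δ j))) ∧
      U = ⋃ i, cone (γ i) ∧ U' = ⋃ i, cone (δ i) ∧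
      ∀ i, r (γ i) (δ i) := by
  obtain ⟨m, m', -, -, hm, hm', hmm'⟩ := h
  obtain ⟨x, y, hx, hy, hxy⟩ := stypeCon_le_matchingExpansionsCon hr hc hmm'
  obtain ⟨n, γ, δ, rfl, rfl, hγδ⟩ := exists_ofFn_of_multisetRel hxy
  obtain ⟨hγ, hU⟩ := decomp_ofFn_iff.1 (hm.expands decomp_cone_halves hx)
  obtain ⟨hδ, hU'⟩ := decomp_ofFn_iff.1 (hm'.expands decomp_cone_halves hy)
  exact ⟨n, γ, δ, hγ, hδ, hU, hU', hγδ⟩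

end Types

/-- If clopen subsets `U` and `U'` of Cantor space have the same
s-type (with respect to a type system `𝒫`), then they admit decompositions into the
same number of pairwise disjoint cones whose addresses are pairwise equivalent. -/
theorem sameSType_decompositions (r : Addr → Addr → Prop) (hr : IsTypeSystem r)
    (U U' : Set Cantor) (hU : IsClopen U) (hU' : IsClopen U')
    (h : SameSType r U U') :
    ∃ (n : ℕ) (γ δ : Fin n → Addr),
      (∀ i j, i ≠ j → Disjoint (cone (γ i)) (cone (γ j))) ∧
      (∀ i j, i ≠ j → Disjoint (cone (δ i)) (cone (δ j))) ∧
      U = ⋃ i, cone (γ i) ∧ U' = ⋃ i, cone (δ i) ∧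
      ∀ i, r (γ i) (δ i) :=
  sameSType_decompositions_general hr.1 hr.2.1 h
end

section
/- Let 𝒫 be a simple type system on Ω which contains a cycle. Then 𝒫 contains exactly one, two or three stable child-closed subsets. Moreover, if 𝒫 contains exactly two stable child-closed subsets then one of them has cardinality 1 and is a subset of the other; and if 𝒫 contains three stable child-closed subsets then two of them have cardinality 1 and the third is the union of the first two. -/
/-- `S` is a union of `r`-classes, i.e. a set of types of the type system. -/
def Saturated (r : Addr → Addr → Prop) (S : Set Addr) : Prop :=
  ∀ α ∈ S, ∀ β, r α β → β ∈ S

/-- `S` is child-closed: with each address (type) it contains both of its children. -/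
def ChildClosed (S : Set Addr) : Prop :=
  ∀ α ∈ S, α ++ [false] ∈ S ∧ α ++ [true] ∈ S

/-- The word `γ` determines a path through `S` from (the type of) `α`. -/
def PathThrough (S : Set Addr) (α γ : Addr) : Prop :=
  ∀ ζ : Addr, ζ <+: γ → α ++ ζ ∈ S

/-- `S` is strongly connected. -/
def StronglyConnected (r : Addr → Addr → Prop) (S : Set Addr) : Prop :=
  ∀ α ∈ S, ∀ β ∈ S, ∃ γ : Addr, γ ≠ [] ∧ PathThrough S α γ ∧ r (α ++ γ) β

/-- A nucleus: a (nonempty) child-closed and strongly connected set of types. -/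
def IsNucleus (r : Addr → Addr → Prop) (S : Set Addr) : Prop :=
  S.Nonempty ∧ Saturated r S ∧ ChildClosed S ∧ StronglyConnected r S

/-- `S` consists of exactly one type. -/
def IsSingleType (r : Addr → Addr → Prop) (S : Set Addr) : Prop :=
  ∃ α : Addr, S = typeOf r α

/-- A multinuclear type system: finitely many pairwise disjoint nuclei containing the
types of all sufficiently long addresses. -/
def Multinuclear (r : Addr → Addr → Prop) : Prop :=
  ∃ (k : ℕ) (Q : Fin k → Set Addr), 0 < k ∧ (∀ i, IsNucleus r (Q i)) ∧
    (∀ i j, i ≠ j → Disjoint (Q i) (Q j)) ∧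
    ∃ t : ℕ, 0 < t ∧ ∀ α : Addr, t ≤ α.length → ∃ i, α ∈ Q i

/-- A nuclear type system: a single nucleus containing the types of all sufficiently
long addresses. -/
def Nuclear (r : Addr → Addr → Prop) : Prop :=
  ∃ Q : Set Addr, IsNucleus r Q ∧ ∃ t : ℕ, 0 < t ∧ ∀ α : Addr, t ≤ α.length → α ∈ Q

/-- An atomic binuclear type system: two disjoint singleton nuclei containing the types
of all sufficiently long addresses. -/
def AtomicBinuclear (r : Addr → Addr → Prop) : Prop :=
  ∃ Q₁ Q₂ : Set Addr, IsNucleus r Q₁ ∧ IsNucleus r Q₂ ∧ Disjoint Q₁ Q₂ ∧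
    IsSingleType r Q₁ ∧ IsSingleType r Q₂ ∧
    ∃ t : ℕ, 0 < t ∧ ∀ α : Addr, t ≤ α.length → α ∈ Q₁ ∪ Q₂

/-- The data `(𝒬, ℛ)` witnessing that a type system is quasinuclear. -/
def QuasinuclearData (r : Addr → Addr → Prop) (Q R : Set Addr) : Prop :=
  Q.Nonempty ∧ R.Nonempty ∧ Saturated r Q ∧ Saturated r R ∧ Disjoint Q R ∧
    (∃ t : ℕ, 0 < t ∧ ∀ α : Addr, t ≤ α.length → α ∈ Q ∪ R) ∧
    IsNucleus r R ∧ StronglyConnected r Q ∧ ChildClosed (Q ∪ R) ∧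
    ∀ α ∈ Q, ∀ β ∈ R, ∃ γ : Addr, r (α ++ γ) β

/-- A quasinuclear type system. -/
def Quasinuclear (r : Addr → Addr → Prop) : Prop :=
  ∃ Q R : Set Addr, QuasinuclearData r Q R

/-- `𝒬†`: the types of `𝒬` both of whose children lie in `𝒬`. -/
def QDagger (Q : Set Addr) : Set Addr :=
  { α ∈ Q | α ++ [false] ∈ Q ∧ α ++ [true] ∈ Q }

/-- An atomic quasinuclear type system: the nucleus `ℛ` is a single type. -/
def AtomicQuasinuclear (r : Addr → Addr → Prop) : Prop :=
  ∃ Q R : Set Addr, QuasinuclearData r Q R ∧ IsSingleType r R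

/-- There is a cycle in `S` based at (the type of) `α`. -/
def HasCycleAt (r : Addr → Addr → Prop) (S : Set Addr) (α : Addr) : Prop :=
  ∃ γ : Addr, γ ≠ [] ∧ PathThrough S α γ ∧ r (α ++ γ) α

/-- `S` is stable: every type of `S` is reachable by a path through `S` from a type of
`S` carrying a cycle in `S`. -/
def Stable (r : Addr → Addr → Prop) (S : Set Addr) : Prop :=
  ∀ β ∈ S, ∃ α ∈ S, HasCycleAt r S α ∧
    ∃ γ : Addr, PathThrough S α γ ∧ r (α ++ γ) β

/-- The collection of nonempty stable child-closed subsets of the type system. -/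
def StableChildClosedSets (r : Addr → Addr → Prop) : Set (Set Addr) :=
  { S | S.Nonempty ∧ Saturated r S ∧ ChildClosed S ∧ Stable r S }

section Lattice

variable {L : Type*} [DistribLattice L] [OrderBot L] {F : Set L} {c s t u : L}

lemma sup_eq_of_pairwiseDisjoint_diff_singleton (hsup : SupClosed F) (hbot : ⊥ ∉ F)
    (hdisj : (F \ {c}).PairwiseDisjoint id) (hs : s ∈ F \ {c}) (ht : t ∈ F \ {c})
    (hst : s ≠ t) : s ⊔ t = c := by
  by_contra hne
  have hmem : s ⊔ t ∈ F \ {c} := ⟨hsup hs.1 ht.1, hne⟩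
  have eq_sup {u : L} (hu : u ∈ F \ {c}) (hle : u ≤ s ⊔ t) : u = s ⊔ t := by
    by_contra hu_ne
    exact hbot ((hdisj hu hmem hu_ne).eq_bot_of_le hle ▸ hu.1)
  exact hst ((eq_sup hs le_sup_left).trans (eq_sup ht le_sup_right).symm)

lemma eq_or_eq_of_le_sup_of_pairwiseDisjoint (hbot : ⊥ ∉ F) (hdisj : F.PairwiseDisjoint id)
    (hs : s ∈ F) (ht : t ∈ F) (hu : u ∈ F) (hle : u ≤ s ⊔ t) : u = s ∨ u = t := by
  by_contra! hne
  have hdisj_sup : Disjoint u (s ⊔ t) := (hdisj hu hs hne.1).sup_right (hdisj hu ht hne.2)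
  exact hbot (hdisj_sup.eq_bot_of_le hle ▸ hu)

theorem eq_singleton_or_pair_or_triple_of_pairwiseDisjoint (hc : IsGreatest F c)
    (hsup : SupClosed F) (hbot : ⊥ ∉ F) (hdisj : (F \ {c}).PairwiseDisjoint id) :
    F = {c} ∨ (∃ s, s ≠ c ∧ F = {s, c}) ∨
      ∃ s t, s ≠ t ∧ s ≠ c ∧ t ≠ c ∧ s ⊔ t = c ∧ F = {s, t, c} := by
  have hF : F = insert c (F \ {c}) := (Set.insert_sdiff_self_of_mem hc.1).symm
  rcases (F \ {c}).eq_empty_or_nonempty with hempty | ⟨s, hs⟩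
  · left
    rw [hF, hempty, insert_empty_eq]
  right
  by_cases hunique : ∀ t ∈ F \ {c}, t = s
  · left
    refine ⟨s, hs.2, ?_⟩
    rw [hF, Set.eq_singleton_iff_unique_mem.2 ⟨hs, hunique⟩, Set.pair_comm]
  · right
    push Not at hunique
    obtain ⟨t, ht, hts⟩ := hunique
    have hst : s ⊔ t = c :=
      sup_eq_of_pairwiseDisjoint_diff_singleton hsup hbot hdisj hs ht hts.symm
    refine ⟨s, t, hts.symm, hs.2, ht.2, hst, Set.Subset.antisymm (fun u hu => ?_) ?_⟩
    · rcases eq_or_ne u c with rfl | huc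
      · simp
      · have hle : u ≤ s ⊔ t := hst ▸ hc.2 hu
        have heq : u = s ∨ u = t :=
          eq_or_eq_of_le_sup_of_pairwiseDisjoint (fun h => hbot h.1) hdisj hs ht ⟨hu, huc⟩ hle
        exact heq.imp_right Or.inl
    · simp [Set.insert_subset_iff, hs.1, ht.1, hc.1]

end Lattice

section Addresses

variable {r s : Addr → Addr → Prop} {S T : Set Addr} {α β γ σ : Addr}

lemma Coherent.append (hr : Coherent r) (h : r α β) (γ : Addr) : r (α ++ γ) (β ++ γ) := by
  induction γ generalizing α β with
  | nil => simpa using h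
  | cons x γ ih =>
    cases x
    · simpa using ih (hr α β h).1
    · simpa using ih (hr α β h).2

lemma ChildClosed.append (hS : ChildClosed S) (h : α ∈ S) (γ : Addr) : α ++ γ ∈ S := by
  induction γ generalizing α with
  | nil => simpa using h
  | cons x γ ih =>
    cases x
    · simpa using ih (hS α h).1
    · simpa using ih (hS α h).2

lemma ChildClosed.pathThrough (hS : ChildClosed S) (h : α ∈ S) (γ : Addr) : PathThrough S α γ :=
  fun ζ _ => hS.append h ζ

lemma ChildClosed.union (hS : ChildClosed S) (hT : ChildClosed T) : ChildClosed (S ∪ T) := by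
  rintro α (h | h)
  · exact (hS α h).imp Or.inl Or.inl
  · exact (hT α h).imp Or.inr Or.inr

lemma Saturated.union (hS : Saturated r S) (hT : Saturated r T) : Saturated r (S ∪ T) := by
  rintro α (h | h) β hαβ
  · exact Or.inl (hS α h β hαβ)
  · exact Or.inr (hT α h β hαβ)

lemma PathThrough.mono (hST : S ⊆ T) (h : PathThrough S α γ) : PathThrough T α γ :=
  fun ζ hζ => hST (h ζ hζ)

lemma HasCycleAt.mono (hST : S ⊆ T) (h : HasCycleAt r S α) : HasCycleAt r T α :=
  let ⟨γ, hγ, hpath, hcycle⟩ := h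
  ⟨γ, hγ, hpath.mono hST, hcycle⟩

lemma Stable.union (hS : Stable r S) (hT : Stable r T) : Stable r (S ∪ T) := by
  rintro β (h | h)
  · obtain ⟨α, hα, hcycle, γ, hpath, hγ⟩ := hS β h
    exact ⟨α, Or.inl hα, hcycle.mono Set.subset_union_left, γ,
      hpath.mono Set.subset_union_left, hγ⟩
  · obtain ⟨α, hα, hcycle, γ, hpath, hγ⟩ := hT β h
    exact ⟨α, Or.inr hα, hcycle.mono Set.subset_union_right, γ,
      hpath.mono Set.subset_union_right, hγ⟩

lemma supClosed_stableChildClosedSets : SupClosed (StableChildClosedSets r) := by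
  rintro S ⟨hne, hSsat, hSchild, hSstable⟩ T ⟨-, hTsat, hTchild, hTstable⟩
  exact ⟨hne.inl, hSsat.union hTsat, hSchild.union hTchild, hSstable.union hTstable⟩

lemma IsSingleType.disjoint_of_ne (hr : Equivalence r) (hS : IsSingleType r S)
    (hT : IsSingleType r T) (hne : S ≠ T) : Disjoint S T := by
  obtain ⟨α, rfl⟩ := hS
  obtain ⟨β, rfl⟩ := hT
  refine Set.disjoint_left.2 fun γ hα hβ => hne (Set.ext fun δ => ?_)
  have hαβ : r α β := hr.trans hα (hr.symm hβ)
  exact ⟨hr.trans (hr.symm hαβ), hr.trans hαβ⟩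

section Reduction

/-- The reduction of `s`: addresses are identified when all their sufficiently long common
extensions are `s`-related. When `s` is a coherent equivalence relation, this is the finest type
system coarser than `s`. -/
def reduction (s : Addr → Addr → Prop) (α β : Addr) : Prop :=
  ∃ n : ℕ, ∀ γ : Addr, n ≤ γ.length → s (α ++ γ) (β ++ γ)

lemma equivalence_reduction (hs : Equivalence s) : Equivalence (reduction s) where
  refl _ := ⟨0, fun _ _ => hs.refl _⟩
  symm := fun ⟨n, hn⟩ => ⟨n, fun γ hγ => hs.symm (hn γ hγ)⟩
  trans := fun ⟨m, hm⟩ ⟨n, hn⟩ => ⟨max m n, fun γ hγ =>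
    hs.trans (hm γ (le_of_max_le_left hγ)) (hn γ (le_of_max_le_right hγ))⟩

lemma coherent_reduction (s : Addr → Addr → Prop) : Coherent (reduction s) := by
  rintro α β ⟨n, hn⟩
  have extend (x : Bool) : reduction s (α ++ [x]) (β ++ [x]) :=
    ⟨n, fun γ hγ => by simpa using hn (x :: γ) (Nat.le_succ_of_le hγ)⟩
  exact ⟨extend false, extend true⟩

lemma reduced_reduction (s : Addr → Addr → Prop) : Reduced (reduction s) := by
  rintro α β ⟨m, hm⟩ ⟨n, hn⟩
  refine ⟨max m n + 1, fun γ hγ => ?_⟩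
  match γ, hγ with
  | false :: γ, hγ =>
    simpa using hm γ (le_of_max_le_left (Nat.le_of_succ_le_succ hγ))
  | true :: γ, hγ =>
    simpa using hn γ (le_of_max_le_right (Nat.le_of_succ_le_succ hγ))

lemma Coherent.isQuotientOf_reduction (hr : Coherent r) (hs : Equivalence s)
    (hrs : ∀ α β, r α β → s α β) : IsQuotientOf (reduction s) r :=
  ⟨⟨equivalence_reduction hs, coherent_reduction s, reduced_reduction s⟩,
    fun _ _ h => ⟨0, fun γ _ => hrs _ _ (hr.append h γ)⟩⟩

end Reduction

section Collapse

/-- The relation `r` with all addresses in `S` identified with each other. It need not be reduced,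
and the quotient of `r` by a child-closed set of types is its `reduction`. -/
def collapse (r : Addr → Addr → Prop) (S : Set Addr) (α β : Addr) : Prop :=
  r α β ∨ α ∈ S ∧ β ∈ S

lemma Saturated.equivalence_collapse (hS : Saturated r S) (hr : Equivalence r) :
    Equivalence (collapse r S) where
  refl α := Or.inl (hr.refl α)
  symm := Or.imp hr.symm And.symm
  trans := by
    rintro α β γ (hαβ | ⟨hα, hβ⟩) (hβγ | ⟨hβ', hγ⟩)
    · exact Or.inl (hr.trans hαβ hβγ)
    · exact Or.inr ⟨hS β hβ' α (hr.symm hαβ), hγ⟩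
    · exact Or.inr ⟨hα, hS β hβ γ hβγ⟩
    · exact Or.inr ⟨hα, hγ⟩

lemma ChildClosed.reduction_collapse (hS : ChildClosed S) (hα : α ∈ S) (hβ : β ∈ S) :
    reduction (collapse r S) α β :=
  ⟨0, fun γ _ => Or.inr ⟨hS.append hα γ, hS.append hβ γ⟩⟩

lemma ChildClosed.exists_forall_append_mem_of_reduction_collapse (hS : ChildClosed S)
    (hr : Equivalence r) (hsat : Saturated r S) (hσ : σ ∈ S)
    (h : reduction (collapse r S) α σ) : ∃ n : ℕ, ∀ γ : Addr, n ≤ γ.length → α ++ γ ∈ S := by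
  obtain ⟨n, hn⟩ := h
  refine ⟨n, fun γ hγ => ?_⟩
  rcases hn γ hγ with hrel | hmem
  · exact hsat _ (hS.append hσ γ) _ (hr.symm hrel)
  · exact hmem.1

end Collapse

section Cycles

/-- The type of `α` is the base of a cycle in the whole type system, so that membership of the path
in a subset need not be recorded as in `HasCycleAt`. -/
def CarriesCycle (r : Addr → Addr → Prop) (α : Addr) : Prop :=
  ∃ γ : Addr, γ ≠ [] ∧ r (α ++ γ) α

/-- The set of types that are descendants of types carrying a cycle; it is the largest stable
child-closed set. -/
def cyclicCore (r : Addr → Addr → Prop) : Set Addr :=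
  { β | ∃ α, CarriesCycle r α ∧ ∃ δ : Addr, r (α ++ δ) β }

lemma CarriesCycle.exists_le_length (h : CarriesCycle r α) (hr : Equivalence r)
    (hcoh : Coherent r) (n : ℕ) : ∃ γ : Addr, n ≤ γ.length ∧ r (α ++ γ) α := by
  obtain ⟨γ, hγ, hcycle⟩ := h
  induction n with
  | zero => exact ⟨γ, Nat.zero_le _, hcycle⟩
  | succ n ih =>
    obtain ⟨δ, hδ, hδcycle⟩ := ih
    refine ⟨δ ++ γ, ?_, ?_⟩
    · have := List.length_pos_iff.2 hγ
      rw [List.length_append]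
      omega
    · rw [← List.append_assoc]
      exact hr.trans (hcoh.append hδcycle γ) hcycle

lemma CarriesCycle.mem_cyclicCore (h : CarriesCycle r α) : α ∈ cyclicCore r :=
  let ⟨γ, _, hcycle⟩ := h
  ⟨α, h, γ, hcycle⟩

lemma saturated_cyclicCore (hr : Equivalence r) : Saturated r (cyclicCore r) :=
  fun _ ⟨α, hα, δ, hδ⟩ _ h => ⟨α, hα, δ, hr.trans hδ h⟩

lemma childClosed_cyclicCore (hr : Coherent r) : ChildClosed (cyclicCore r) := by
  rintro β ⟨α, hα, δ, hδ⟩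
  have child_mem (x : Bool) : β ++ [x] ∈ cyclicCore r :=
    ⟨α, hα, δ ++ [x], by simpa using hr.append hδ [x]⟩
  exact ⟨child_mem false, child_mem true⟩

lemma stable_cyclicCore (hr : Coherent r) : Stable r (cyclicCore r) := by
  rintro β ⟨α, hα, δ, hδ⟩
  have hpath := (childClosed_cyclicCore hr).pathThrough hα.mem_cyclicCore
  have ⟨γ, hγ, hcycle⟩ := hα
  exact ⟨α, hα.mem_cyclicCore, ⟨γ, hγ, hpath γ, hcycle⟩, δ, hpath δ, hδ⟩

lemma Stable.subset_cyclicCore (hS : Stable r S) : S ⊆ cyclicCore r := by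
  intro β hβ
  obtain ⟨α, -, ⟨γ, hγ, -, hcycle⟩, δ, -, hδ⟩ := hS β hβ
  exact ⟨α, ⟨γ, hγ, hcycle⟩, δ, hδ⟩

lemma IsTypeSystem.isGreatest_cyclicCore (hr : IsTypeSystem r) (hcyc : ∃ α, CarriesCycle r α) :
    IsGreatest (StableChildClosedSets r) (cyclicCore r) := by
  obtain ⟨hequiv, hcoh, -⟩ := hr
  obtain ⟨α, hα⟩ := hcyc
  exact ⟨⟨⟨α, hα.mem_cyclicCore⟩, saturated_cyclicCore hequiv, childClosed_cyclicCore hcoh,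
    stable_cyclicCore hcoh⟩, fun _ hS => hS.2.2.2.subset_cyclicCore⟩

lemma ChildClosed.cyclicCore_subset (hS : ChildClosed S) (hr : Equivalence r) (hcoh : Coherent r)
    (hsat : Saturated r S)
    (hlong : ∀ α : Addr, ∃ n : ℕ, ∀ γ : Addr, n ≤ γ.length → α ++ γ ∈ S) :
    cyclicCore r ⊆ S := by
  rintro β ⟨α, hα, δ, hδ⟩
  obtain ⟨n, hn⟩ := hlong α
  obtain ⟨γ, hγ, hcycle⟩ := hα.exists_le_length hr hcoh n
  have hαS : α ∈ S := hsat _ (hn γ hγ) α hcycle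
  exact hsat _ (hS.append hαS δ) β hδ

end Cycles

section Simple

lemma SimpleTS.isSingleType_or_cyclicCore_subset (hr : SimpleTS r) (hne : S.Nonempty)
    (hsat : Saturated r S) (hS : ChildClosed S) : IsSingleType r S ∨ cyclicCore r ⊆ S := by
  obtain ⟨⟨hequiv, hcoh, -⟩, -, hsimple⟩ := hr
  obtain ⟨σ, hσ⟩ := hne
  have hquot : IsQuotientOf (reduction (collapse r S)) r :=
    hcoh.isQuotientOf_reduction (hsat.equivalence_collapse hequiv) fun _ _ => Or.inl
  rcases hsimple _ hquot with htrivial | huniversal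
  · exact Or.inl ⟨σ, Set.Subset.antisymm
      (fun β hβ => (htrivial σ β).1 (hS.reduction_collapse hσ hβ)) (hsat σ hσ)⟩
  · exact Or.inr (hS.cyclicCore_subset hequiv hcoh hsat fun α =>
      hS.exists_forall_append_mem_of_reduction_collapse hequiv hsat hσ (huniversal α σ))

lemma SimpleTS.isSingleType_of_ne_cyclicCore (hr : SimpleTS r) (hS : S ∈ StableChildClosedSets r)
    (hne : S ≠ cyclicCore r) : IsSingleType r S := by
  obtain ⟨hnonempty, hsat, hchild, hstable⟩ := hS
  exact (hr.isSingleType_or_cyclicCore_subset hnonempty hsat hchild).resolve_right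
    fun hcore => hne (hstable.subset_cyclicCore.antisymm hcore)

lemma SimpleTS.pairwiseDisjoint_diff_cyclicCore (hr : SimpleTS r) :
    (StableChildClosedSets r \ {cyclicCore r}).PairwiseDisjoint id :=
  fun _ hS _ hT => (hr.isSingleType_of_ne_cyclicCore hS.1 hS.2).disjoint_of_ne hr.1.1
    (hr.isSingleType_of_ne_cyclicCore hT.1 hT.2)

end Simple

end Addresses

/-- A simple type system admitting a cycle contains exactly one, two
or three stable child-closed subsets; if exactly two, then one is a single type
contained in the other; if three, then two are single types and the third is their
union. -/
theorem stable_childClosed_subsets_classification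
    (r : Addr → Addr → Prop) (hr : SimpleTS r)
    (hcyc : ∃ α γ : Addr, γ ≠ [] ∧ r (α ++ γ) α) :
    ((StableChildClosedSets r).ncard = 1 ∨ (StableChildClosedSets r).ncard = 2 ∨
      (StableChildClosedSets r).ncard = 3) ∧
    ((StableChildClosedSets r).ncard = 2 →
      ∃ S₁ ∈ StableChildClosedSets r, ∃ S₂ ∈ StableChildClosedSets r,
        S₁ ≠ S₂ ∧ S₁ ⊆ S₂ ∧ IsSingleType r S₁) ∧
    ((StableChildClosedSets r).ncard = 3 →
      ∃ S₁ ∈ StableChildClosedSets r, ∃ S₂ ∈ StableChildClosedSets r,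
        ∃ S₃ ∈ StableChildClosedSets r,
        S₁ ≠ S₂ ∧ S₁ ≠ S₃ ∧ S₂ ≠ S₃ ∧
        IsSingleType r S₁ ∧ IsSingleType r S₂ ∧ S₃ = S₁ ∪ S₂) := by
  have hcore := hr.1.isGreatest_cyclicCore hcyc
  have hempty : ⊥ ∉ StableChildClosedSets r := fun h => h.1.ne_empty rfl
  rcases eq_singleton_or_pair_or_triple_of_pairwiseDisjoint hcore supClosed_stableChildClosedSets
    hempty hr.pairwiseDisjoint_diff_cyclicCore with
    h | ⟨S, hSC, h⟩ | ⟨S, T, hST, hSC, hTC, hunion, h⟩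
  · have hcard : (StableChildClosedSets r).ncard = 1 := Set.ncard_eq_one.2 ⟨_, h⟩
    exact ⟨Or.inl hcard, fun _ => by omega, fun _ => by omega⟩
  · have hcard : (StableChildClosedSets r).ncard = 2 := Set.ncard_eq_two.2 ⟨_, _, hSC, h⟩
    have hS : S ∈ StableChildClosedSets r := by simp [h]
    exact ⟨Or.inr (Or.inl hcard),
      fun _ => ⟨S, hS, _, hcore.1, hSC, hcore.2 hS, hr.isSingleType_of_ne_cyclicCore hS hSC⟩,
      fun _ => by omega⟩
  · have hcard : (StableChildClosedSets r).ncard = 3 :=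
      Set.ncard_eq_three.2 ⟨_, _, _, hST, hSC, hTC, h⟩
    have hS : S ∈ StableChildClosedSets r := by simp [h]
    have hT : T ∈ StableChildClosedSets r := by simp [h]
    exact ⟨Or.inr (Or.inr hcard), fun _ => by omega, fun _ =>
      ⟨S, hS, T, hT, _, hcore.1, hST, hSC, hTC, hr.isSingleType_of_ne_cyclicCore hS hSC,
        hr.isSingleType_of_ne_cyclicCore hT hTC, hunion.symm⟩⟩
end
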